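/- arXiv:0902.4743 — 4 statements merged into one kernel-verified Lean document; each statement's English description precedes it below -/
import Mathlib

section
/- In a coherent category E, every internal co-category is a co-equivalence relation: the morphisms l and r are jointly epimorphic, and there exists a morphism s : Q1 → Q1 satisfying s∘l = r, s∘r = l, [id, s]∘q = l∘i and [s, id]∘q = r∘i. -/
/-!
The coprojections `ν1`, `ν2` are split monic and, being the legs of a pushout, jointly cover `Q2`.
Since unions are stable, `Q1` is covered by the two parts on which `q` takes values in `ν1` and in
`ν2`. If `q x = ν1 y`, the left co-unit law gives `x = l (i y)`; if `q x = ν2 y`, the right one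
gives `x = r (i y)`. Hence `Q1` is the union of the subobjects `l` and `r`.

Unions are effective: `Q1` is the pushout of `l` and `r` over their intersection. As `l x = r y`
forces `x = y` (apply `i`), the assignments `l x ↦ r x` and `r x ↦ l x` agree on this intersection
and glue to the co-inverse `s`. All remaining equations are checked on `l` and `r`.
-/

open CategoryTheory CategoryTheory.Limits

universe v u

/-- Data of an internal co-category in a category `E`. -/
structure CocatStruct (E : Type u) [Category.{v} E] where
  Q0 : E
  Q1 : E
  Q2 : E
  l : Q0 ⟶ Q1
  r : Q0 ⟶ Q1
  i : Q1 ⟶ Q0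
  ν1 : Q1 ⟶ Q2
  ν2 : Q1 ⟶ Q2
  q : Q1 ⟶ Q2

variable {E : Type u} [Category.{v} E]

/-- The axioms for an internal co-category. -/
structure CocatStruct.IsCocategory (C : CocatStruct E) : Prop where
  po : IsPushout C.r C.l C.ν1 C.ν2
  li : C.l ≫ C.i = 𝟙 C.Q0
  ri : C.r ≫ C.i = 𝟙 C.Q0
  ql : C.l ≫ C.q = C.l ≫ C.ν1
  qr : C.r ≫ C.q = C.r ≫ C.ν2
  counit_left : ∀ u : C.Q2 ⟶ C.Q1, C.ν1 ≫ u = C.i ≫ C.l → C.ν2 ≫ u = 𝟙 C.Q1 →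
    C.q ≫ u = 𝟙 C.Q1
  counit_right : ∀ u : C.Q2 ⟶ C.Q1, C.ν1 ≫ u = 𝟙 C.Q1 → C.ν2 ≫ u = C.i ≫ C.r →
    C.q ≫ u = 𝟙 C.Q1
  coassoc : ∀ {Q3 : E} (μ1 μ2 μ3 : C.Q1 ⟶ Q3) (j12 j23 u v : C.Q2 ⟶ Q3),
    C.ν1 ≫ j12 = μ1 → C.ν2 ≫ j12 = μ2 →
    C.ν1 ≫ j23 = μ2 → C.ν2 ≫ j23 = μ3 →
    C.ν1 ≫ u = C.q ≫ j12 → C.ν2 ≫ u = μ3 →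
    C.ν1 ≫ v = μ1 → C.ν2 ≫ v = C.q ≫ j23 →
    C.q ≫ u = C.q ≫ v

/-- Two parallel morphisms are jointly epimorphic. -/
def JointlyEpi {X Y : E} (f g : X ⟶ Y) : Prop :=
  ∀ {Z : E} (u v : Y ⟶ Z), f ≫ u = f ≫ v → g ≫ u = g ≫ v → u = v

/-- A coherent category: finite limits, pullback-stable (strong-epi/mono) images, and
pullback-stable unions of subobjects. -/
class CoherentCategory (E : Type u) [Category.{v} E] extends HasFiniteLimits E : Prop where
  exists_image : ∀ {X Y : E} (f : X ⟶ Y), ∃ (I : E) (e : X ⟶ I) (m : I ⟶ Y),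
    StrongEpi e ∧ Mono m ∧ e ≫ m = f
  strongEpi_pullback : ∀ {P X Y Z : E} {fst : P ⟶ X} {snd : P ⟶ Y} {f : X ⟶ Z} {g : Y ⟶ Z},
    IsPullback fst snd f g → StrongEpi g → StrongEpi fst
  exists_union : ∀ {X : E} (a b : Subobject X), ∃ c : Subobject X,
    a ≤ c ∧ b ≤ c ∧ ∀ d : Subobject X, a ≤ d → b ≤ d → c ≤ d
  union_pullback : ∀ {X Y : E} (f : Y ⟶ X) (a b c : Subobject X),
    a ≤ c → b ≤ c → (∀ d : Subobject X, a ≤ d → b ≤ d → c ≤ d) →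
    ∀ d : Subobject Y, (Subobject.pullback f).obj a ≤ d → (Subobject.pullback f).obj b ≤ d →
      (Subobject.pullback f).obj c ≤ d

/-- A category with pullbacks has stable unions if any two subobjects of an object have a join, and
pulling back along a morphism preserves these joins. Joins are expressed by `IsLUB` because, in the
absence of images and coproducts, `Subobject X` carries no `⊔`. -/
class HasStableUnions (E : Type u) [Category.{v} E] [HasPullbacks E] : Prop where
  exists_isLUB : ∀ {X : E} (a b : Subobject X), ∃ c, IsLUB {a, b} c
  isLUB_pullback : ∀ {X Y : E} (f : Y ⟶ X) {a b c : Subobject X}, IsLUB {a, b} c →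
    IsLUB {(Subobject.pullback f).obj a, (Subobject.pullback f).obj b}
      ((Subobject.pullback f).obj c)

lemma isLUB_pair_iff {α : Type*} [Preorder α] {a b c : α} :
    IsLUB {a, b} c ↔ a ≤ c ∧ b ≤ c ∧ ∀ d, a ≤ d → b ≤ d → c ≤ d := by
  simp [IsLUB, IsLeast, mem_lowerBounds, and_assoc]

lemma isLUB_pair_top_iff_codisjoint {α : Type*} [PartialOrder α] [OrderTop α] {a b : α} :
    IsLUB {a, b} ⊤ ↔ Codisjoint a b := by
  simp [isLUB_pair_iff, Codisjoint]

instance CoherentCategory.hasStableUnions [CoherentCategory E] : HasStableUnions E where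
  exists_isLUB a b := by
    simpa only [isLUB_pair_iff] using CoherentCategory.exists_union a b
  isLUB_pullback f a b c h := by
    obtain ⟨ha, hb, hc⟩ := isLUB_pair_iff.1 h
    exact isLUB_pair_iff.2 ⟨(Subobject.pullback f).monotone ha, (Subobject.pullback f).monotone hb,
      CoherentCategory.union_pullback f a b c ha hb hc⟩

lemma exists_codisjoint_factorization [HasPullbacks E] [HasStableUnions E] {X A B : E}
    (a : A ⟶ X) (b : B ⟶ X) [Mono a] [Mono b] :
    ∃ (U : E) (m : U ⟶ X) (a' : A ⟶ U) (b' : B ⟶ U) (_ : Mono m) (_ : Mono a') (_ : Mono b'),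
      a' ≫ m = a ∧ b' ≫ m = b ∧ Codisjoint (Subobject.mk a') (Subobject.mk b') := by
  obtain ⟨c, hc⟩ := HasStableUnions.exists_isLUB (Subobject.mk a) (Subobject.mk b)
  obtain ⟨hac, hbc, hc⟩ := isLUB_pair_iff.1 hc
  refine ⟨c, c.arrow, Subobject.ofMkLE a c hac, Subobject.ofMkLE b c hbc, inferInstance,
    inferInstance, inferInstance, Subobject.ofMkLE_arrow hac, Subobject.ofMkLE_arrow hbc, ?_⟩
  intro d had hbd
  have hcd : c ≤ (Subobject.map c.arrow).obj d := by
    apply hc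
    · simpa only [Subobject.map_mk, Subobject.ofMkLE_arrow] using
        (Subobject.map c.arrow).monotone had
    · simpa only [Subobject.map_mk, Subobject.ofMkLE_arrow] using
        (Subobject.map c.arrow).monotone hbd
  have map_top_le : (Subobject.map c.arrow).obj ⊤ ≤ (Subobject.map c.arrow).obj d := by
    rwa [Subobject.map_top, Subobject.mk_arrow]
  simpa only [Subobject.pullback_map_self] using
    (Subobject.pullback c.arrow).monotone map_top_le

section Unions

variable {X A B : E} {a : A ⟶ X} {b : B ⟶ X} [Mono a] [Mono b]

lemma isIso_of_codisjoint (hab : Codisjoint (Subobject.mk a) (Subobject.mk b)) {M : E}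
    {m : M ⟶ X} [Mono m] {a' : A ⟶ M} {b' : B ⟶ M} (ha : a' ≫ m = a) (hb : b' ≫ m = b) :
    IsIso m :=
  (Subobject.isIso_iff_mk_eq_top m).2 <| top_le_iff.1 <|
    hab (Subobject.mk_le_mk_of_comm a' ha) (Subobject.mk_le_mk_of_comm b' hb)

lemma hom_ext_of_codisjoint [HasEqualizers E]
    (hab : Codisjoint (Subobject.mk a) (Subobject.mk b)) {Z : E} {u v : X ⟶ Z}
    (ha : a ≫ u = a ≫ v) (hb : b ≫ u = b ≫ v) : u = v := by
  have := isIso_of_codisjoint hab (equalizer.lift_ι a ha) (equalizer.lift_ι b hb)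
  exact eq_of_epi_equalizer

lemma codisjoint_of_isPushout {W : E} {f : W ⟶ A} {g : W ⟶ B} (h : IsPushout f g a b) :
    Codisjoint (Subobject.mk a) (Subobject.mk b) := by
  intro d ha hb
  let σ : X ⟶ (d : E) := h.desc (Subobject.ofMkLE a d ha) (Subobject.ofMkLE b d hb)
    (by simpa only [← cancel_mono d.arrow, Category.assoc, Subobject.ofMkLE_arrow] using h.w)
  have hσ : σ ≫ d.arrow = 𝟙 X := by apply h.hom_ext <;> simp [σ]
  exact Subobject.le_of_comm ((⊤ : Subobject X).arrow ≫ σ) (by simp [hσ])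

variable [HasPullbacks E] [HasStableUnions E]

lemma codisjoint_pullback_snd (hab : Codisjoint (Subobject.mk a) (Subobject.mk b)) {T : E}
    (f : T ⟶ X) :
    Codisjoint (Subobject.mk (pullback.snd a f)) (Subobject.mk (pullback.snd b f)) := by
  have h := HasStableUnions.isLUB_pullback f (isLUB_pair_top_iff_codisjoint.2 hab)
  rwa [Subobject.pullback_top, isLUB_pair_top_iff_codisjoint,
    Subobject.pullback_obj_mk (.of_hasPullback a f),
    Subobject.pullback_obj_mk (.of_hasPullback b f)] at h

lemma hom_ext_of_codisjoint_pullback [HasEqualizers E]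
    (hab : Codisjoint (Subobject.mk a) (Subobject.mk b)) {T Z : E} (f : T ⟶ X) {u v : T ⟶ Z}
    (ha : ∀ {S : E} (x : S ⟶ A) (t : S ⟶ T), x ≫ a = t ≫ f → t ≫ u = t ≫ v)
    (hb : ∀ {S : E} (y : S ⟶ B) (t : S ⟶ T), y ≫ b = t ≫ f → t ≫ u = t ≫ v) :
    u = v :=
  hom_ext_of_codisjoint (codisjoint_pullback_snd hab f)
    (ha _ _ pullback.condition) (hb _ _ pullback.condition)

lemma mono_of_codisjoint [HasEqualizers E]
    (hab : Codisjoint (Subobject.mk a) (Subobject.mk b)) {Y : E} (p : X ⟶ Y)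
    [Mono (a ≫ p)] [Mono (b ≫ p)]
    (hp : ∀ {S : E} (x : S ⟶ A) (y : S ⟶ B), x ≫ a ≫ p = y ≫ b ≫ p → x ≫ a = y ≫ b) :
    Mono p := by
  have eq_of_left {S : E} (x : S ⟶ A) (t : S ⟶ X) (h : x ≫ a ≫ p = t ≫ p) : x ≫ a = t := by
    refine hom_ext_of_codisjoint_pullback hab t (fun x' s hx' => ?_) (fun y s hy => ?_)
    · have : (s ≫ x) ≫ a ≫ p = x' ≫ a ≫ p := by
        rw [Category.assoc, h, reassoc_of% hx']
      rw [← hx', ← (cancel_mono _).1 this, Category.assoc]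
    · rw [← hy, ← Category.assoc]
      exact hp _ _ (by rw [Category.assoc, h, reassoc_of% hy])
  have eq_of_right {S : E} (y : S ⟶ B) (t : S ⟶ X) (h : y ≫ b ≫ p = t ≫ p) : y ≫ b = t := by
    refine hom_ext_of_codisjoint_pullback hab t (fun x s hx => ?_) (fun y' s hy' => ?_)
    · rw [← hx, ← Category.assoc]
      exact (hp _ _ (by rw [Category.assoc, h, reassoc_of% hx])).symm
    · have : (s ≫ y) ≫ b ≫ p = y' ≫ b ≫ p := by
        rw [Category.assoc, h, reassoc_of% hy']
      rw [← hy', ← (cancel_mono _).1 this, Category.assoc]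
  refine ⟨fun u v huv => hom_ext_of_codisjoint_pullback hab u (fun x s hx => ?_) (fun y s hy => ?_)⟩
  · rw [← hx]
    exact eq_of_left _ _ (by rw [reassoc_of% hx, huv, Category.assoc])
  · rw [← hy]
    exact eq_of_right _ _ (by rw [reassoc_of% hy, huv, Category.assoc])

variable [HasBinaryProducts E]

lemma exists_desc_of_codisjoint (hab : Codisjoint (Subobject.mk a) (Subobject.mk b)) {Z : E}
    (f : A ⟶ Z) (g : B ⟶ Z)
    (hfg : ∀ {S : E} (x : S ⟶ A) (y : S ⟶ B), x ≫ a = y ≫ b → x ≫ f = y ≫ g) :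
    ∃ k : X ⟶ Z, a ≫ k = f ∧ b ≫ k = g := by
  have := hasEqualizers_of_hasPullbacks_and_binary_products (C := E)
  have : Mono (prod.lift a f) := mono_of_mono_fac (prod.lift_fst a f)
  have : Mono (prod.lift b g) := mono_of_mono_fac (prod.lift_fst b g)
  -- The graph of the glued morphism is the union of the graphs of `f` and `g`.
  obtain ⟨U, m, a', b', _, _, _, ha, hb, hab'⟩ :=
    exists_codisjoint_factorization (prod.lift a f) (prod.lift b g)
  have ha₁ : a' ≫ m ≫ prod.fst = a := by rw [reassoc_of% ha, prod.lift_fst]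
  have hb₁ : b' ≫ m ≫ prod.fst = b := by rw [reassoc_of% hb, prod.lift_fst]
  have ha₂ : a' ≫ m ≫ prod.snd = f := by rw [reassoc_of% ha, prod.lift_snd]
  have hb₂ : b' ≫ m ≫ prod.snd = g := by rw [reassoc_of% hb, prod.lift_snd]
  have : Mono (a' ≫ m ≫ prod.fst) := by rwa [ha₁]
  have : Mono (b' ≫ m ≫ prod.fst) := by rwa [hb₁]
  have : Mono (m ≫ prod.fst) := by
    refine mono_of_codisjoint hab' _ fun x y hxy => ?_
    rw [ha₁, hb₁] at hxy
    rw [← cancel_mono m, Category.assoc, Category.assoc, ha, hb, prod.comp_lift, prod.comp_lift,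
      hxy, hfg x y hxy]
  have := isIso_of_codisjoint hab ha₁ hb₁
  refine ⟨inv (m ≫ prod.fst) ≫ m ≫ prod.snd, ?_, ?_⟩
  · rw [← ha₂, (IsIso.eq_comp_inv _).2 ha₁, Category.assoc]
  · rw [← hb₂, (IsIso.eq_comp_inv _).2 hb₁, Category.assoc]

lemma isPushout_of_codisjoint (hab : Codisjoint (Subobject.mk a) (Subobject.mk b)) {P : E}
    {fst : P ⟶ A} {snd : P ⟶ B} (h : IsPullback fst snd a b) : IsPushout fst snd a b := by
  have := hasEqualizers_of_hasPullbacks_and_binary_products (C := E)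
  have exists_desc (s : PushoutCocone fst snd) :
      ∃ k : X ⟶ s.pt, a ≫ k = s.inl ∧ b ≫ k = s.inr :=
    exists_desc_of_codisjoint hab s.inl s.inr fun x y hxy => by
      rw [← h.lift_fst x y hxy, Category.assoc, s.condition, h.lift_snd_assoc]
  choose k hka hkb using exists_desc
  refine ⟨⟨h.w⟩, ⟨PushoutCocone.IsColimit.mk h.w k hka hkb fun s k' ha hb => ?_⟩⟩
  exact hom_ext_of_codisjoint hab (ha.trans (hka s).symm) (hb.trans (hkb s).symm)

end Unions

/-- The axioms for an internal co-category except co-associativity: a co-unital, not necessarily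
co-associative, comultiplication on a reflexive co-graph. As in `CocatStruct.IsCocategory`, the
co-unit laws range over the maps out of `Q2` with the prescribed restrictions along `ν1`, `ν2`. -/
structure CocatStruct.IsCounital (C : CocatStruct E) : Prop where
  po : IsPushout C.r C.l C.ν1 C.ν2
  li : C.l ≫ C.i = 𝟙 C.Q0
  ri : C.r ≫ C.i = 𝟙 C.Q0
  ql : C.l ≫ C.q = C.l ≫ C.ν1
  qr : C.r ≫ C.q = C.r ≫ C.ν2
  counit_left : ∀ u : C.Q2 ⟶ C.Q1, C.ν1 ≫ u = C.i ≫ C.l → C.ν2 ≫ u = 𝟙 C.Q1 →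
    C.q ≫ u = 𝟙 C.Q1
  counit_right : ∀ u : C.Q2 ⟶ C.Q1, C.ν1 ≫ u = 𝟙 C.Q1 → C.ν2 ≫ u = C.i ≫ C.r →
    C.q ≫ u = 𝟙 C.Q1

lemma CocatStruct.IsCocategory.isCounital {C : CocatStruct E} (h : C.IsCocategory) :
    C.IsCounital where
  __ := h

namespace CocatStruct.IsCounital

variable {C : CocatStruct E}

lemma mono_l (h : C.IsCounital) : Mono C.l := mono_of_mono_fac h.li

lemma mono_r (h : C.IsCounital) : Mono C.r := mono_of_mono_fac h.ri

lemma exists_counit_left (h : C.IsCounital) :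
    ∃ u : C.Q2 ⟶ C.Q1, C.ν1 ≫ u = C.i ≫ C.l ∧ C.ν2 ≫ u = 𝟙 C.Q1 ∧ C.q ≫ u = 𝟙 C.Q1 := by
  have w : C.r ≫ C.i ≫ C.l = C.l ≫ 𝟙 C.Q1 := by
    rw [reassoc_of% h.ri, Category.comp_id]
  have h₁ := h.po.inl_desc _ _ w
  have h₂ := h.po.inr_desc _ _ w
  exact ⟨_, h₁, h₂, h.counit_left _ h₁ h₂⟩

lemma exists_counit_right (h : C.IsCounital) :
    ∃ u : C.Q2 ⟶ C.Q1, C.ν1 ≫ u = 𝟙 C.Q1 ∧ C.ν2 ≫ u = C.i ≫ C.r ∧ C.q ≫ u = 𝟙 C.Q1 := by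
  have w : C.r ≫ 𝟙 C.Q1 = C.l ≫ C.i ≫ C.r := by
    rw [reassoc_of% h.li, Category.comp_id]
  have h₁ := h.po.inl_desc _ _ w
  have h₂ := h.po.inr_desc _ _ w
  exact ⟨_, h₁, h₂, h.counit_right _ h₁ h₂⟩

lemma comp_i_comp_l_eq_of_comp_ν1_eq (h : C.IsCounital) {S : E} {x y : S ⟶ C.Q1}
    (hxy : y ≫ C.ν1 = x ≫ C.q) : (y ≫ C.i) ≫ C.l = x := by
  obtain ⟨u, hu₁, -, hqu⟩ := h.exists_counit_left
  rw [Category.assoc, ← hu₁, reassoc_of% hxy, hqu, Category.comp_id]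

lemma comp_i_comp_r_eq_of_comp_ν2_eq (h : C.IsCounital) {S : E} {x y : S ⟶ C.Q1}
    (hxy : y ≫ C.ν2 = x ≫ C.q) : (y ≫ C.i) ≫ C.r = x := by
  obtain ⟨u, -, hu₂, hqu⟩ := h.exists_counit_right
  rw [Category.assoc, ← hu₂, reassoc_of% hxy, hqu, Category.comp_id]

lemma eq_of_comp_l_eq_comp_r (h : C.IsCounital) {S : E} {x y : S ⟶ C.Q0}
    (hxy : x ≫ C.l = y ≫ C.r) : x = y := by
  simpa only [Category.assoc, h.li, h.ri, Category.comp_id] using hxy =≫ C.i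

lemma codisjoint_l_r [HasPullbacks E] [HasStableUnions E] (h : C.IsCounital) :
    haveI := h.mono_l
    haveI := h.mono_r
    Codisjoint (Subobject.mk C.l) (Subobject.mk C.r) := by
  obtain ⟨_, -, hν2, -⟩ := h.exists_counit_left
  obtain ⟨_, hν1, -, -⟩ := h.exists_counit_right
  have := mono_of_mono_fac hν1
  have := mono_of_mono_fac hν2
  have := h.mono_l
  have := h.mono_r
  exact (codisjoint_pullback_snd (codisjoint_of_isPushout h.po) C.q).mono
    (Subobject.mk_le_mk_of_comm _ (h.comp_i_comp_l_eq_of_comp_ν1_eq pullback.condition))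
    (Subobject.mk_le_mk_of_comm _ (h.comp_i_comp_r_eq_of_comp_ν2_eq pullback.condition))

lemma isPushout_pullback [HasPullbacks E] [HasBinaryProducts E] [HasStableUnions E]
    (h : C.IsCounital) :
    IsPushout (pullback.fst C.l C.r) (pullback.snd C.l C.r) C.l C.r :=
  haveI := h.mono_l
  haveI := h.mono_r
  isPushout_of_codisjoint h.codisjoint_l_r (.of_hasPullback C.l C.r)

end CocatStruct.IsCounital

theorem cocategory_isCoequivalenceRelation_general [HasPullbacks E] [HasBinaryProducts E]
    [HasStableUnions E] (C : CocatStruct E) (h : C.IsCounital) :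
    JointlyEpi C.l C.r ∧
    ∃ s : C.Q1 ⟶ C.Q1, C.l ≫ s = C.r ∧ C.r ≫ s = C.l ∧
      (∀ u : C.Q2 ⟶ C.Q1, C.ν1 ≫ u = 𝟙 C.Q1 → C.ν2 ≫ u = s →
        C.q ≫ u = C.i ≫ C.l) ∧
      (∀ u : C.Q2 ⟶ C.Q1, C.ν1 ≫ u = s → C.ν2 ≫ u = 𝟙 C.Q1 →
        C.q ≫ u = C.i ≫ C.r) := by
  have po := h.isPushout_pullback
  have fst_eq_snd : pullback.fst C.l C.r = pullback.snd C.l C.r :=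
    h.eq_of_comp_l_eq_comp_r pullback.condition
  have w : pullback.fst C.l C.r ≫ C.r = pullback.snd C.l C.r ≫ C.l := by
    rw [fst_eq_snd, ← pullback.condition, fst_eq_snd]
  obtain ⟨s, hls, hrs⟩ : ∃ s : C.Q1 ⟶ C.Q1, C.l ≫ s = C.r ∧ C.r ≫ s = C.l :=
    ⟨po.desc C.r C.l w, po.inl_desc _ _ w, po.inr_desc _ _ w⟩
  refine ⟨fun _ _ => po.hom_ext, s, hls, hrs, fun u h₁ h₂ => po.hom_ext ?_ ?_,
    fun u h₁ h₂ => po.hom_ext ?_ ?_⟩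
  · rw [reassoc_of% h.ql, h₁, reassoc_of% h.li, Category.comp_id]
  · rw [reassoc_of% h.qr, h₂, reassoc_of% h.ri, hrs]
  · rw [reassoc_of% h.ql, h₁, reassoc_of% h.li, hls]
  · rw [reassoc_of% h.qr, h₂, reassoc_of% h.ri, Category.comp_id]

/-- In a coherent category, every internal co-category is a co-equivalence relation:
`l` and `r` are jointly epimorphic, and there is a co-inverse `s` satisfying
`s ∘ l = r`, `s ∘ r = l`, `[id, s] ∘ q = l ∘ i` and `[s, id] ∘ q = r ∘ i`. -/
theorem cocategory_isCoequivalenceRelation [CoherentCategory E]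
    (C : CocatStruct E) (h : C.IsCocategory) :
    JointlyEpi C.l C.r ∧
    ∃ s : C.Q1 ⟶ C.Q1, C.l ≫ s = C.r ∧ C.r ≫ s = C.l ∧
      (∀ u : C.Q2 ⟶ C.Q1, C.ν1 ≫ u = 𝟙 C.Q1 → C.ν2 ≫ u = s →
        C.q ≫ u = C.i ≫ C.l) ∧
      (∀ u : C.Q2 ⟶ C.Q1, C.ν1 ≫ u = s → C.ν2 ≫ u = 𝟙 C.Q1 →
        C.q ≫ u = C.i ≫ C.r) :=
  cocategory_isCoequivalenceRelation_general C h.isCounital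
end

section
/- Let Q be an internal co-category in a category E. If (P1, m1, q1) is a pullback of ν1 : Q1 → Q2 along q : Q1 → Q2 (so m1, q1 : P1 → Q1 with q∘m1 = ν1∘q1), then m1 = l∘i∘q1. Dually, if (P2, m2, q2) is a pullback of ν2 along q, then m2 = r∘i∘q2. -/
open CategoryTheory CategoryTheory.Limits

universe v u

variable {E : Type u} [Category.{v} E]

section CounitMap

variable {Q0 Q1 Q2 : E} {l r : Q0 ⟶ Q1} {i : Q1 ⟶ Q0} {ν1 ν2 : Q1 ⟶ Q2}

/-- The map `[l ∘ i, id] : Q2 ⟶ Q1` of the left co-unit law. The right one, `[id, r ∘ i]`, is the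
same construction on the flipped pushout, in which `l`, `r` and `ν1`, `ν2` are exchanged. -/
noncomputable def counitMap (po : IsPushout r l ν1 ν2) (ri : r ≫ i = 𝟙 Q0) : Q2 ⟶ Q1 :=
  po.desc (i ≫ l) (𝟙 Q1) (by rw [reassoc_of% ri, Category.comp_id])

theorem inl_counitMap (po : IsPushout r l ν1 ν2) (ri : r ≫ i = 𝟙 Q0) :
    ν1 ≫ counitMap po ri = i ≫ l :=
  po.inl_desc _ _ _

theorem inr_counitMap (po : IsPushout r l ν1 ν2) (ri : r ≫ i = 𝟙 Q0) :
    ν2 ≫ counitMap po ri = 𝟙 Q1 :=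
  po.inr_desc _ _ _

/-- The co-unit law says that `[l ∘ i, id]` is a retraction of `q`, so it recovers `m` from
`q ∘ m = ν1 ∘ n`. -/
theorem pullback_coprojection_eq_general {q : Q1 ⟶ Q2} (po : IsPushout r l ν1 ν2)
    (ri : r ≫ i = 𝟙 Q0) (counit : q ≫ counitMap po ri = 𝟙 Q1) {X : E} {m n : X ⟶ Q1}
    (w : m ≫ q = n ≫ ν1) : m = n ≫ i ≫ l :=
  calc
    m = m ≫ q ≫ counitMap po ri := by rw [counit, Category.comp_id]
    _ = n ≫ ν1 ≫ counitMap po ri := by rw [reassoc_of% w]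
    _ = n ≫ i ≫ l := by rw [inl_counitMap]

end CounitMap

/-- If `(P1, m1, q1)` is a pullback of `ν1` along `q` then `m1 = l ∘ i ∘ q1`; dually,
if `(P2, m2, q2)` is a pullback of `ν2` along `q` then `m2 = r ∘ i ∘ q2`. -/
theorem pullback_coprojection_eq (C : CocatStruct E) (h : C.IsCocategory) :
    (∀ {P1 : E} (m1 q1 : P1 ⟶ C.Q1), IsPullback m1 q1 C.q C.ν1 → m1 = q1 ≫ C.i ≫ C.l) ∧
    (∀ {P2 : E} (m2 q2 : P2 ⟶ C.Q1), IsPullback m2 q2 C.q C.ν2 → m2 = q2 ≫ C.i ≫ C.r) := by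
  have left_counit : C.q ≫ counitMap h.po h.ri = 𝟙 C.Q1 :=
    h.counit_left _ (inl_counitMap _ _) (inr_counitMap _ _)
  have right_counit : C.q ≫ counitMap h.po.flip h.li = 𝟙 C.Q1 :=
    h.counit_right _ (inr_counitMap _ _) (inl_counitMap _ _)
  exact ⟨fun _ _ hP => pullback_coprojection_eq_general h.po h.ri left_counit hP.w,
    fun _ _ hP => pullback_coprojection_eq_general h.po.flip h.li right_counit hP.w⟩
end

section
/- In a coherent category E, every co-preorder is a co-equivalence relation: if Q is an internal co-category whose structure maps l, r : Q0 → Q1 are jointly epimorphic, then there exists a morphism s : Q1 → Q1 with s∘l = r and s∘r = l. -/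
/-!
The common retraction `i` makes `l` and `r` subobjects of `Q1`, and `l a = r b` forces `a = b`.

The coprojections of the pushout `Q2` cover it, so their pullbacks along `q` cover `Q1`. Where
`q x = ν1 y`, the left co-unit law gives `x = l (i y)`; where `q x = ν2 y`, the right one gives
`x = r (i y)`. Hence `Q1` is the union of `l` and `r`.

A union is the pushout of its two members over their intersection, and `r` on the first member
agrees with `l` on the second over the intersection of `l` and `r`, so together they define `s`.
-/

open CategoryTheory CategoryTheory.Limits

universe v u

variable {E : Type u} [Category.{v} E]

/-- A category with pullbacks in which any two subobjects have a union, and unions are stable under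
pullback: the part of the axioms of a coherent category that does not speak of images. -/
class HasStableUnions_s3 (E : Type u) [Category.{v} E] [HasPullbacks E] : Prop where
  exists_isLUB {X : E} (a b : Subobject X) : ∃ c, IsLUB {a, b} c
  isLUB_pullback {X Y : E} (f : Y ⟶ X) {a b c : Subobject X} (hc : IsLUB {a, b} c) :
    IsLUB {(Subobject.pullback f).obj a, (Subobject.pullback f).obj b}
      ((Subobject.pullback f).obj c)

instance [CoherentCategory E] : HasStableUnions_s3 E where
  exists_isLUB a b := by
    simpa only [isLUB_pair_iff] using CoherentCategory.exists_union a b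
  isLUB_pullback f a b c hc := by
    obtain ⟨hac, hbc, hc⟩ := isLUB_pair_iff.mp hc
    exact isLUB_pair_iff.mpr ⟨(Subobject.pullback f).monotone hac,
      (Subobject.pullback f).monotone hbc, CoherentCategory.union_pullback f a b c hac hbc hc⟩

/-- The cospan `f`, `g` is jointly extremal epimorphic: `f` and `g` do not both factor
through a proper subobject of `X`. For monomorphisms, this says that their union is `X`. -/
def JointlyExtremalEpi {A B X : E} (f : A ⟶ X) (g : B ⟶ X) : Prop :=
  ∀ d : Subobject X, d.Factors f → d.Factors g → d = ⊤

lemma mk_le_iff_factors {A X : E} (f : A ⟶ X) [Mono f] (d : Subobject X) :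
    Subobject.mk f ≤ d ↔ d.Factors f :=
  ⟨fun hd => Subobject.factors_of_le f hd (Subobject.mk_factors_self f),
    fun hd => Subobject.mk_le_of_comm (d.factorThru f hd) (d.factorThru_arrow f hd)⟩

lemma jointlyExtremalEpi_iff_isLUB {A B X : E} {f : A ⟶ X} {g : B ⟶ X} [Mono f] [Mono g] :
    JointlyExtremalEpi f g ↔ IsLUB {Subobject.mk f, Subobject.mk g} ⊤ := by
  simp only [JointlyExtremalEpi, isLUB_pair_iff, mk_le_iff_factors, top_le_iff,
    Subobject.top_factors, true_and]

lemma exists_jointlyExtremalEpi_comp_mono [HasPullbacks E] [HasStableUnions_s3 E] {A B X : E}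
    (m : A ⟶ X) (n : B ⟶ X) [Mono m] [Mono n] :
    ∃ (G : E) (γ : G ⟶ X) (m' : A ⟶ G) (n' : B ⟶ G),
      Mono γ ∧ m' ≫ γ = m ∧ n' ≫ γ = n ∧ JointlyExtremalEpi m' n' := by
  obtain ⟨c, hc⟩ := HasStableUnions_s3.exists_isLUB (Subobject.mk m) (Subobject.mk n)
  rw [isLUB_pair_iff, mk_le_iff_factors, mk_le_iff_factors] at hc
  obtain ⟨hm, hn, c_le⟩ := hc
  refine ⟨c, c.arrow, c.factorThru m hm, c.factorThru n hn, inferInstance, by simp, by simp, ?_⟩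
  intro d hdm hdn
  rw [← Subobject.pullback_map_self c.arrow d, pullback_factors_iff,
    Subobject.factorThru_arrow, ← mk_le_iff_factors] at hdm hdn
  have hcd : c ≤ (Subobject.map c.arrow).obj d := c_le _ hdm hdn
  rw [← top_le_iff, ← Subobject.pullback_map_self c.arrow d, ← Subobject.pullback_self c.arrow,
    Subobject.mk_arrow]
  exact (Subobject.pullback c.arrow).monotone hcd

namespace JointlyExtremalEpi

variable {W A B X : E} {m : A ⟶ X} {n : B ⟶ X}

lemma symm (h : JointlyExtremalEpi m n) : JointlyExtremalEpi n m :=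
  fun d hn hm => h d hm hn

lemma of_isPushout {f : W ⟶ A} {g : W ⟶ B} (po : IsPushout f g m n) :
    JointlyExtremalEpi m n := by
  intro d hm hn
  have hw : f ≫ d.factorThru m hm = g ≫ d.factorThru n hn := by
    simp [← cancel_mono d.arrow, po.w]
  have section_arrow : po.desc _ _ hw ≫ d.arrow = 𝟙 X := by
    apply po.hom_ext <;> simp
  have : IsSplitEpi d.arrow := ⟨⟨_, section_arrow⟩⟩
  have : IsIso d.arrow := isIso_of_mono_of_isSplitEpi _
  exact Subobject.eq_top_of_isIso_arrow d

lemma of_comp {A' B' : E} {a : A ⟶ A'} {b : B ⟶ B'} {m' : A' ⟶ X} {n' : B' ⟶ X}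
    (h : JointlyExtremalEpi (a ≫ m') (b ≫ n')) : JointlyExtremalEpi m' n' :=
  fun d hm hn => h d (d.factors_of_factors_right a hm) (d.factors_of_factors_right b hn)

lemma hom_ext [HasEqualizers E] (h : JointlyExtremalEpi m n) {Z : E} {u v : X ⟶ Z}
    (hm : m ≫ u = m ≫ v) (hn : n ≫ u = n ≫ v) : u = v := by
  have htop : equalizerSubobject u v = ⊤ :=
    h _ (equalizerSubobject_factors u v m hm) (equalizerSubobject_factors u v n hn)
  have hid := (equalizerSubobject_factors_iff u v (𝟙 X)).mp (htop ▸ Subobject.top_factors _)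
  simpa only [Category.id_comp] using hid

variable [Mono m] [Mono n]

lemma pullback_snd [HasPullbacks E] [HasStableUnions_s3 E] (h : JointlyExtremalEpi m n) {T : E}
    (f : T ⟶ X) : JointlyExtremalEpi (pullback.snd m f) (pullback.snd n f) := by
  rw [jointlyExtremalEpi_iff_isLUB] at h ⊢
  simpa only [Subobject.pullback_obj_mk (IsPullback.of_hasPullback _ f), Subobject.pullback_top]
    using HasStableUnions_s3.isLUB_pullback f h

variable [HasFiniteLimits E] [HasStableUnions_s3 E]

lemma hom_ext_of_comp (h : JointlyExtremalEpi m n) {T Z : E} (f : T ⟶ X) {u v : T ⟶ Z}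
    (hm : ∀ {S : E} (t : S ⟶ T) (a : S ⟶ A), t ≫ f = a ≫ m → t ≫ u = t ≫ v)
    (hn : ∀ {S : E} (t : S ⟶ T) (b : S ⟶ B), t ≫ f = b ≫ n → t ≫ u = t ≫ v) : u = v :=
  (h.pullback_snd f).hom_ext (hm _ _ pullback.condition.symm) (hn _ _ pullback.condition.symm)

variable {G : E} {m' : A ⟶ G} {n' : B ⟶ G} {p : W ⟶ A} {q : W ⟶ B} {π : G ⟶ X}

-- In other words, `m'` is the pullback of `m` along `π`.
lemma eq_comp_of_comp_eq (h' : JointlyExtremalEpi m' n') (hm : m' ≫ π = m) (hn : n' ≫ π = n)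
    (sq : IsPullback p q m n) (w : p ≫ m' = q ≫ n') {T : E} {x : T ⟶ G} {a : T ⟶ A}
    (hx : x ≫ π = a ≫ m) : x = a ≫ m' := by
  have : Mono m' := mono_of_mono_fac hm
  have : Mono n' := mono_of_mono_fac hn
  refine h'.hom_ext_of_comp x (fun t a' ht => ?_) (fun t b ht => ?_)
  · have ha : (t ≫ a) ≫ m = a' ≫ m := by
      rw [Category.assoc, ← hx, reassoc_of% ht, hm]
    rw [ht, ← Category.assoc, (cancel_mono m).mp ha]
  · have hb : (t ≫ a) ≫ m = b ≫ n := by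
      rw [Category.assoc, ← hx, reassoc_of% ht, hn]
    obtain ⟨c, hca, hcb⟩ := sq.exists_lift _ _ hb
    rw [ht, ← Category.assoc, ← hca, ← hcb, Category.assoc, Category.assoc, w]

lemma isIso_of_comp_eq (h : JointlyExtremalEpi m n) (h' : JointlyExtremalEpi m' n')
    (hm : m' ≫ π = m) (hn : n' ≫ π = n) (sq : IsPullback p q m n) (w : p ≫ m' = q ≫ n') :
    IsIso π := by
  have : Mono m' := mono_of_mono_fac hm
  have : Mono n' := mono_of_mono_fac hn
  have : Mono π := by
    refine ⟨fun x y hxy => h'.hom_ext_of_comp x (fun t a ht => ?_) (fun t b ht => ?_)⟩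
    · have hy : (t ≫ y) ≫ π = a ≫ m := by rw [Category.assoc, ← hxy, reassoc_of% ht, hm]
      rw [ht, h'.eq_comp_of_comp_eq hm hn sq w hy]
    · have hy : (t ≫ y) ≫ π = b ≫ n := by rw [Category.assoc, ← hxy, reassoc_of% ht, hn]
      rw [ht, h'.symm.eq_comp_of_comp_eq hn hm sq.flip w.symm hy]
  rw [Subobject.isIso_iff_mk_eq_top]
  exact h _ ((Subobject.mk_factors_iff π m).mpr ⟨m', hm⟩)
    ((Subobject.mk_factors_iff π n).mpr ⟨n', hn⟩)

lemma exists_desc (h : JointlyExtremalEpi m n) (sq : IsPullback p q m n) {Z : E} {f : A ⟶ Z}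
    {g : B ⟶ Z} (w : p ≫ f = q ≫ g) : ∃ s : X ⟶ Z, m ≫ s = f ∧ n ≫ s = g := by
  -- The union of the graphs of `f` and `g` is the graph of the glued morphism.
  have : Mono (prod.lift m f) := mono_of_mono_fac (prod.lift_fst m f)
  have : Mono (prod.lift n g) := mono_of_mono_fac (prod.lift_fst n g)
  obtain ⟨G, γ, m', n', _, hm, hn, h'⟩ :=
    exists_jointlyExtremalEpi_comp_mono (prod.lift m f) (prod.lift n g)
  have hm_fst : m' ≫ γ ≫ prod.fst = m := by rw [reassoc_of% hm, prod.lift_fst]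
  have hn_fst : n' ≫ γ ≫ prod.fst = n := by rw [reassoc_of% hn, prod.lift_fst]
  have overlap : p ≫ m' = q ≫ n' := by
    rw [← cancel_mono γ, Category.assoc, Category.assoc, hm, hn, prod.comp_lift, prod.comp_lift,
      sq.w, w]
  have : IsIso (γ ≫ prod.fst) := h.isIso_of_comp_eq h' hm_fst hn_fst sq overlap
  refine ⟨inv (γ ≫ prod.fst) ≫ γ ≫ prod.snd, ?_, ?_⟩
  · have hm_inv : m ≫ inv (γ ≫ prod.fst) = m' := (IsIso.comp_inv_eq _).mpr hm_fst.symm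
    rw [reassoc_of% hm_inv, reassoc_of% hm, prod.lift_snd]
  · have hn_inv : n ≫ inv (γ ≫ prod.fst) = n' := (IsIso.comp_inv_eq _).mpr hn_fst.symm
    rw [reassoc_of% hn_inv, reassoc_of% hn, prod.lift_snd]

lemma isPushout (h : JointlyExtremalEpi m n) (sq : IsPullback p q m n) : IsPushout p q m n := by
  choose desc hm hn using fun s : PushoutCocone p q => h.exists_desc sq s.condition
  exact ⟨⟨sq.w⟩, ⟨PushoutCocone.IsColimit.mk sq.w desc hm hn fun s _ hm' hn' =>
    h.hom_ext (hm'.trans (hm s).symm) (hn'.trans (hn s).symm)⟩⟩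

end JointlyExtremalEpi

lemma jointlyExtremalEpi_of_counit [HasPullbacks E] [HasStableUnions_s3 E] {A B X Y : E}
    {l : A ⟶ X} {r : B ⟶ X} {i : X ⟶ A} {j : X ⟶ B} {ν₁ ν₂ q : X ⟶ Y} {u v : Y ⟶ X}
    (hν : JointlyExtremalEpi ν₁ ν₂) (hu₁ : ν₁ ≫ u = i ≫ l) (hu₂ : ν₂ ≫ u = 𝟙 X) (hqu : q ≫ u = 𝟙 X)
    (hv₁ : ν₁ ≫ v = 𝟙 X) (hv₂ : ν₂ ≫ v = j ≫ r) (hqv : q ≫ v = 𝟙 X) :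
    JointlyExtremalEpi l r := by
  have : Mono ν₁ := mono_of_mono_fac hv₁
  have : Mono ν₂ := mono_of_mono_fac hu₂
  have fac_l : pullback.snd ν₁ q = (pullback.fst ν₁ q ≫ i) ≫ l := by
    simpa [hu₁, hqu] using (congrArg (· ≫ u) (pullback.condition (f := ν₁) (g := q))).symm
  have fac_r : pullback.snd ν₂ q = (pullback.fst ν₂ q ≫ j) ≫ r := by
    simpa [hv₂, hqv] using (congrArg (· ≫ v) (pullback.condition (f := ν₂) (g := q))).symm
  have cover := hν.pullback_snd q
  rw [fac_l, fac_r] at cover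
  exact cover.of_comp

theorem copreorder_isCoequivalenceRelation_general [HasFiniteLimits E] [HasStableUnions_s3 E]
    (C : CocatStruct E) (po : IsPushout C.r C.l C.ν1 C.ν2)
    (li : C.l ≫ C.i = 𝟙 C.Q0) (ri : C.r ≫ C.i = 𝟙 C.Q0)
    (counit_left : ∀ u : C.Q2 ⟶ C.Q1, C.ν1 ≫ u = C.i ≫ C.l → C.ν2 ≫ u = 𝟙 C.Q1 →
      C.q ≫ u = 𝟙 C.Q1)
    (counit_right : ∀ u : C.Q2 ⟶ C.Q1, C.ν1 ≫ u = 𝟙 C.Q1 → C.ν2 ≫ u = C.i ≫ C.r →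
      C.q ≫ u = 𝟙 C.Q1) :
    ∃ s : C.Q1 ⟶ C.Q1, C.l ≫ s = C.r ∧ C.r ≫ s = C.l := by
  have : Mono C.l := mono_of_mono_fac li
  have : Mono C.r := mono_of_mono_fac ri
  obtain ⟨u, hu₁, hu₂⟩ := po.exists_desc (C.i ≫ C.l) (𝟙 C.Q1) (by simp [reassoc_of% ri])
  obtain ⟨v, hv₁, hv₂⟩ := po.exists_desc (𝟙 C.Q1) (C.i ≫ C.r) (by simp [reassoc_of% li])
  have union : JointlyExtremalEpi C.l C.r :=
    jointlyExtremalEpi_of_counit (.of_isPushout po) hu₁ hu₂ (counit_left u hu₁ hu₂)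
      hv₁ hv₂ (counit_right v hv₁ hv₂)
  have sq := IsPullback.of_hasPullback C.l C.r
  have fst_eq_snd : pullback.fst C.l C.r = pullback.snd C.l C.r := by
    simpa only [Category.assoc, li, ri, Category.comp_id] using congrArg (· ≫ C.i) sq.w
  have swap_agree : pullback.fst C.l C.r ≫ C.r = pullback.snd C.l C.r ≫ C.l := by
    have w := sq.w
    rw [fst_eq_snd] at w ⊢
    exact w.symm
  exact (union.isPushout sq).exists_desc C.r C.l swap_agree

/-- In a coherent category, every co-preorder is a co-equivalence relation: if the structure
maps `l, r` of a co-category are jointly epimorphic, there is `s : Q1 ⟶ Q1` with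
`s ∘ l = r` and `s ∘ r = l`. -/
theorem copreorder_isCoequivalenceRelation [CoherentCategory E]
    (C : CocatStruct E) (h : C.IsCocategory) (hje : JointlyEpi C.l C.r) :
    ∃ s : C.Q1 ⟶ C.Q1, C.l ≫ s = C.r ∧ C.r ≫ s = C.l :=
  copreorder_isCoequivalenceRelation_general C h.po h.li h.ri h.counit_left h.counit_right
end

section
/- Let Q be an internal co-category in a category E whose maps l, r are jointly epimorphic (a co-preorder). Then any morphism s : Q1 → Q1 satisfying s∘l = r and s∘r = l automatically satisfies the co-inverse laws [id, s]∘q = l∘i and [s, id]∘q = r∘i, so that Q is a co-equivalence relation. -/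
open CategoryTheory CategoryTheory.Limits

universe v u

variable {E : Type u} [Category.{v} E]

/-!
Since `l` and `r` are jointly epimorphic, the co-inverse laws can be tested on `l` and `r`. There
`q` becomes `ν1` and `ν2`, so each law reduces to one of `r ≫ s = l` and `l ≫ s = r`.
-/

theorem JointlyEpi.eq_retraction_comp_iff {X Y Z : E} {f g : X ⟶ Y} (hfg : JointlyEpi f g)
    {p : Y ⟶ X} (hf : f ≫ p = 𝟙 X) (hg : g ≫ p = 𝟙 X) {u : Y ⟶ Z} {w : X ⟶ Z} :
    u = p ≫ w ↔ f ≫ u = w ∧ g ≫ u = w := by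
  have hfw : f ≫ p ≫ w = w := by rw [reassoc_of% hf]
  have hgw : g ≫ p ≫ w = w := by rw [reassoc_of% hg]
  constructor
  · rintro rfl
    exact ⟨hfw, hgw⟩
  · rintro ⟨hfu, hgu⟩
    exact hfg _ _ (hfu.trans hfw.symm) (hgu.trans hgw.symm)

theorem CocatStruct.q_comp_eq_i_comp_iff (C : CocatStruct E)
    (li : C.l ≫ C.i = 𝟙 C.Q0) (ri : C.r ≫ C.i = 𝟙 C.Q0)
    (ql : C.l ≫ C.q = C.l ≫ C.ν1) (qr : C.r ≫ C.q = C.r ≫ C.ν2)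
    (hje : JointlyEpi C.l C.r) {Z : E} (u : C.Q2 ⟶ Z) (w : C.Q0 ⟶ Z) :
    C.q ≫ u = C.i ≫ w ↔ C.l ≫ C.ν1 ≫ u = w ∧ C.r ≫ C.ν2 ≫ u = w := by
  rw [hje.eq_retraction_comp_iff li ri, reassoc_of% ql, reassoc_of% qr]

theorem copreorder_coinverse_laws_general (C : CocatStruct E)
    (li : C.l ≫ C.i = 𝟙 C.Q0) (ri : C.r ≫ C.i = 𝟙 C.Q0)
    (ql : C.l ≫ C.q = C.l ≫ C.ν1) (qr : C.r ≫ C.q = C.r ≫ C.ν2)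
    (hje : JointlyEpi C.l C.r) (s : C.Q1 ⟶ C.Q1) :
    (∀ u : C.Q2 ⟶ C.Q1, C.ν1 ≫ u = 𝟙 C.Q1 → C.ν2 ≫ u = s →
      (C.q ≫ u = C.i ≫ C.l ↔ C.r ≫ s = C.l)) ∧
    (∀ u : C.Q2 ⟶ C.Q1, C.ν1 ≫ u = s → C.ν2 ≫ u = 𝟙 C.Q1 →
      (C.q ≫ u = C.i ≫ C.r ↔ C.l ≫ s = C.r)) := by
  refine ⟨fun u h₁ h₂ => ?_, fun u h₁ h₂ => ?_⟩
  · rw [C.q_comp_eq_i_comp_iff li ri ql qr hje, h₁, h₂, Category.comp_id, and_iff_right rfl]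
  · rw [C.q_comp_eq_i_comp_iff li ri ql qr hje, h₁, h₂, Category.comp_id, and_iff_left rfl]

/-- In a co-preorder, any `s : Q1 ⟶ Q1` with `s ∘ l = r` and `s ∘ r = l` automatically
satisfies the co-inverse laws `[id, s] ∘ q = l ∘ i` and `[s, id] ∘ q = r ∘ i`, so the
co-category is a co-equivalence relation. -/
theorem copreorder_coinverse_laws (C : CocatStruct E) (h : C.IsCocategory)
    (hje : JointlyEpi C.l C.r) (s : C.Q1 ⟶ C.Q1)
    (hsl : C.l ≫ s = C.r) (hsr : C.r ≫ s = C.l) :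
    (∀ u : C.Q2 ⟶ C.Q1, C.ν1 ≫ u = 𝟙 C.Q1 → C.ν2 ≫ u = s →
      C.q ≫ u = C.i ≫ C.l) ∧
    (∀ u : C.Q2 ⟶ C.Q1, C.ν1 ≫ u = s → C.ν2 ≫ u = 𝟙 C.Q1 →
      C.q ≫ u = C.i ≫ C.r) := by
  have hlaws := copreorder_coinverse_laws_general C h.li h.ri h.ql h.qr hje s
  exact ⟨fun u h₁ h₂ => (hlaws.1 u h₁ h₂).2 hsr, fun u h₁ h₂ => (hlaws.2 u h₁ h₂).2 hsl⟩
end
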